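/- Define F : X_ε → ℝ² by F(x,y) = (x, y·f₀(x)/f_ε(x)). Then F is a 2ε-isometry for the sup-distance: for all p, q ∈ X_ε, | d_∞(F(p), F(q)) − d_∞(p,q) | ≤ 2ε, where d_∞((x,y),(x',y')) = max(|x−x'|,|y−y'|). -/

import Mathlib

/-!
A convex function with a critical point is minimal there, so `f₀ ≥ f₀ (-1) = 0` and `fε > 0`.
Hence `F` scales each vertical fibre `[0, fε x]` linearly onto `[0, f₀ x]`, and no point of a fibre
moves by more than the difference of the two heights, which is `ε`. By the triangle inequality,
moving both endpoints by at most `ε` changes a distance by at most `2ε`.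
-/

open Set

theorem isMinOn_univ_of_hasDerivAt2_nonneg {f f' f'' : ℝ → ℝ} {a : ℝ}
    (hf : ∀ x, HasDerivAt f (f' x) x) (hf' : ∀ x, HasDerivAt f' (f'' x) x)
    (hf'' : ∀ x, 0 ≤ f'' x) (ha : f' a = 0) : IsMinOn f univ a := by
  have f_convex : ConvexOn ℝ univ f :=
    convexOn_of_hasDerivWithinAt2_nonneg convex_univ
      (fun x _ ↦ (hf x).continuousAt.continuousWithinAt)
      (fun x _ ↦ (hf x).hasDerivWithinAt) (fun x _ ↦ (hf' x).hasDerivWithinAt) (fun x _ ↦ hf'' x)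
  have right_deriv_eq_zero : derivWithin f (Ioi a) a = 0 :=
    ((hf a).hasDerivWithinAt.derivWithin (uniqueDiffWithinAt_Ioi a)).trans ha
  exact f_convex.isMinOn_of_rightDeriv_eq_zero (by simp) right_deriv_eq_zero

theorem abs_mul_div_sub_self_le {K : Type*} [Field K] [LinearOrder K] [IsStrictOrderedRing K]
    {a b y : K} (hb : b ≠ 0) (hy : |y| ≤ |b|) : |y * a / b - y| ≤ |a - b| :=
  calc |y * a / b - y| = |y / b * (a - b)| := by congr 1; field_simp
    _ = |y| / |b| * |a - b| := by rw [abs_mul, abs_div]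
    _ ≤ |a - b| := mul_le_of_le_one_left (abs_nonneg _) (div_le_one_of_le₀ hy (abs_nonneg b))

/-- The closed region over `s` between the horizontal axis and the graph of `g`. The paper's `X_ε`
is `closedSubgraph (Icc (-1) 1) f_ε`; Mathlib's `regionBetween` is the open analogue. -/
def closedSubgraph {α : Type*} (s : Set α) (g : α → ℝ) : Set (α × ℝ) :=
  {p | p.1 ∈ s ∧ 0 ≤ p.2 ∧ p.2 ≤ g p.1}

/-- The map scaling the fibre over each `x` linearly so that height `g x` goes to height `f x`,
only meaningful where `g` does not vanish. The paper's `F` is `verticalRescale f₀ f_ε`. -/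
noncomputable def verticalRescale {α : Type*} (f g : α → ℝ) (p : α × ℝ) : α × ℝ :=
  (p.1, p.2 * f p.1 / g p.1)

section PseudoMetricSpace

variable {α : Type*} [PseudoMetricSpace α] {f g : α → ℝ}

theorem dist_verticalRescale_self_le {p : α × ℝ} (hg : g p.1 ≠ 0) (hp : |p.2| ≤ |g p.1|) :
    dist (verticalRescale f g p) p ≤ |f p.1 - g p.1| := by
  rw [Prod.dist_eq, verticalRescale, dist_self, Real.dist_eq]
  exact max_le (abs_nonneg _) (abs_mul_div_sub_self_le hg hp)

theorem stmt_16_general {s : Set α} {ε : ℝ} (hg : ∀ x ∈ s, 0 < g x)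
    (hfg : ∀ x ∈ s, |f x - g x| ≤ ε) :
    ∀ p ∈ closedSubgraph s g, ∀ q ∈ closedSubgraph s g,
      |dist (verticalRescale f g p) (verticalRescale f g q) - dist p q| ≤ 2 * ε := by
  have displacement_le : ∀ p ∈ closedSubgraph s g, dist (verticalRescale f g p) p ≤ ε :=
    fun p ⟨hps, hp0, hpg⟩ ↦
      (dist_verticalRescale_self_le (hg p.1 hps).ne' (abs_le_abs_of_nonneg hp0 hpg)).trans
        (hfg p.1 hps)
  intro p hp q hq
  calc |dist (verticalRescale f g p) (verticalRescale f g q) - dist p q|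
      ≤ dist (verticalRescale f g p) p + dist (verticalRescale f g q) q :=
        dist_dist_dist_le _ _ _ _
    _ ≤ ε + ε := add_le_add (displacement_le p hp) (displacement_le q hq)
    _ = 2 * ε := (two_mul ε).symm

end PseudoMetricSpace

theorem stmt_16 (ε k : ℝ) (hε : 0 < ε) (hεk : ε < k) (hk : k < 1 / 2)
    (φ : ℝ → ℝ) (hφc : Continuous φ) (hφ0 : ∀ x, 0 ≤ φ x) (hφ1 : ∀ x, φ x ≤ 1)
    (hφsupp : ∀ x, x ∉ Set.Icc (-k) k → φ x = 0)
    (hφint : (∫ x, φ x) = k)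
    (f₀ f₀' : ℝ → ℝ)
    (hfd : ∀ x, HasDerivAt f₀ (f₀' x) x)
    (hfd2 : ∀ x, HasDerivAt f₀' (φ x) x)
    (hf'm1 : f₀' (-1) = 0) (hfm1 : f₀ (-1) = 0)
    (fε : ℝ → ℝ) (hfε : fε = fun x => f₀ x + ε)
    (Xε : Set (ℝ × ℝ))
    (hXε : Xε = {p : ℝ × ℝ | p.1 ∈ Set.Icc (-1 : ℝ) 1 ∧ 0 ≤ p.2 ∧ p.2 ≤ fε p.1})
    (F : ℝ × ℝ → ℝ × ℝ) (hF : F = fun p => (p.1, p.2 * f₀ p.1 / fε p.1)) :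
    ∀ p ∈ Xε, ∀ q ∈ Xε, |dist (F p) (F q) - dist p q| ≤ 2 * ε := by
  have f₀_nonneg (x : ℝ) : 0 ≤ f₀ x :=
    hfm1 ▸ isMinOn_univ_of_hasDerivAt2_nonneg hfd hfd2 hφ0 hf'm1 (mem_univ x)
  subst hfε hXε hF
  exact stmt_16_general (fun x _ ↦ add_pos_of_nonneg_of_pos (f₀_nonneg x) hε)
    (fun x _ ↦ by simp [abs_of_pos hε])
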